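/- arXiv:2402.02261 — 4 statements merged into one kernel-verified Lean document; each statement's English description precedes it below -/
import Mathlib

section
/- Let R be a ring with an internal grading by the natural numbers, i.e., a family of additive subgroups A : ℕ → AddSubgroup R forming a graded ring (1 ∈ A 0, (A i)*(A j) ⊆ A (i+j), and R is the internal direct sum of the A i), and suppose there is n ∈ ℕ such that A i = 0 for all i > n. Then R is strongly unit nil-clean if and only if the subring A 0 is strongly unit nil-clean. -/
/-!
Strong nil-cleanness of `y` is the same as nilpotency of `y - y ^ 2`: if `y = e + b` then
`y - y ^ 2 = (1 - 2 * e - b) * b` is a product of commuting factors one of which is nilpotent, and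
if `(y - y ^ 2) ^ k = 0` then `1 - (1 - y ^ k) ^ k` is an idempotent polynomial in `y` differing
from `y` by a multiple of `y - y ^ 2` (`isStronglyNilClean_iff`). Hence strong nil-cleanness can be
lifted along a ring homomorphism with nil kernel (`IsStronglyNilClean.of_map`).

For the grading, the projection `π : R → A 0` is a ring homomorphism split by the inclusion, so
applying `π` to decompositions in `R` of multiples of elements of `A 0` gives one direction. For the
other, an element of the kernel of `π` lives in degrees `≥ 1`, and its power of exponent `k` in
degrees `≥ k` (`decompose_pow_eq_zero`), so its power of exponent `n + 1` vanishes and the kernel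
is nil. Given `x`, if `u` is a unit of `A 0` with `u * π x` strongly nil-clean, then `u` is also a
unit of `R`, and `u * x` is strongly nil-clean because its image under `π` is `u * π x`.
-/

/-- An element `x` of a ring is *strongly nil-clean* if `x = e + b` where `e` is an
idempotent, `b` is nilpotent, and `e` and `b` commute. -/
def IsStronglyNilClean {R : Type*} [Ring R] (x : R) : Prop :=
  ∃ e b : R, IsIdempotentElem e ∧ IsNilpotent b ∧ e * b = b * e ∧ x = e + b

/-- A ring `R` is *strongly unit nil-clean* if for every `x : R` there is a unit `u`
such that `u * x` is strongly nil-clean. -/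
def StronglyUnitNilClean (R : Type*) [Ring R] : Prop :=
  ∀ x : R, ∃ u : Rˣ, IsStronglyNilClean ((u : R) * x)

/-- A ring `R` is *unit-regular* if every `a : R` satisfies `a = a * u * a` for some unit `u`. -/
def UnitRegular (R : Type*) [Ring R] : Prop :=
  ∀ a : R, ∃ u : Rˣ, a = a * (u : R) * a

/-- A group is *locally finite* if every finitely generated subgroup is finite. -/
def LocallyFiniteGroup (G : Type*) [Group G] : Prop :=
  ∀ H : Subgroup G, H.FG → (H : Set G).Finite

/-- A subset `T` of a ring is *nilpotent* if there is `n ≥ 1` such that every product of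
`n` elements of `T` is zero. -/
def IsNilpotentSubset {R : Type*} [Ring R] (T : Set R) : Prop :=
  ∃ n : ℕ, 0 < n ∧ ∀ l : List R, (∀ a ∈ l, a ∈ T) → l.length = n → l.prod = 0

/-- A subset `S` of a ring is *locally nilpotent* if the non-unital subring generated by
any finite subset of `S` is nilpotent. -/
def IsLocallyNilpotentSet {R : Type*} [Ring R] (S : Set R) : Prop :=
  ∀ F : Finset R, (F : Set R) ⊆ S →
    IsNilpotentSubset ((NonUnitalSubring.closure (F : Set R) : Set R))

/-- A ring is *NI* if the set of nilpotent elements forms a two-sided ideal. -/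
def IsNIRing (R : Type*) [Ring R] : Prop :=
  ∃ I : TwoSidedIdeal R, ∀ x : R, x ∈ I ↔ IsNilpotent x

/-- A ring is *weakly 2-primal* if its set of nilpotent elements is a two-sided ideal
which is moreover locally nilpotent. -/
def Weakly2Primal (R : Type*) [Ring R] : Prop :=
  IsNIRing R ∧ IsLocallyNilpotentSet {x : R | IsNilpotent x}

open Polynomial in
/-- The polynomial lifting idempotents modulo powers of `X - X ^ 2` agrees with `X` at `0` and at
`1`, hence modulo `X * (1 - X)`. -/
theorem sub_sq_dvd_sub_idempotent {k : ℕ} (hk : k ≠ 0) :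
    (X - X ^ 2 : ℤ[X]) ∣ X - (1 - (1 - X ^ k) ^ k) := by
  have hco : IsCoprime (X : ℤ[X]) (1 - X) := ⟨1, 1, by ring⟩
  have h0 : (X : ℤ[X]) ∣ X - (1 - (1 - X ^ k) ^ k) := by
    rw [X_dvd_iff, coeff_zero_eq_eval_zero]
    simp [hk]
  have h1 : (1 - X : ℤ[X]) ∣ X - (1 - (1 - X ^ k) ^ k) := by
    have h : (X - C 1 : ℤ[X]) ∣ X - (1 - (1 - X ^ k) ^ k) := by
      rw [dvd_iff_isRoot]
      simp [hk]
    rw [← neg_sub, neg_dvd]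
    simpa using h
  have h2 := hco.mul_dvd h0 h1
  rwa [show (X * (1 - X) : ℤ[X]) = X - X ^ 2 by ring] at h2

theorem isStronglyNilClean_iff {R : Type*} [Ring R] (y : R) :
    IsStronglyNilClean y ↔ IsNilpotent (y - y ^ 2) := by
  constructor
  · rintro ⟨e, b, he, hb, hcomm, rfl⟩
    have key : e + b - (e + b) ^ 2 = (1 - 2 * e - b) * b := by
      have h : (e + b) ^ 2 = e + 2 * e * b + b * b := by
        rw [sq, add_mul, mul_add, mul_add, he.eq, ← hcomm]
        noncomm_ring
      rw [h]
      noncomm_ring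
    rw [key]
    have hc : Commute e b := hcomm
    refine Commute.isNilpotent_mul_left ?_ hb
    exact ((Commute.one_left b).sub_left
      ((Nat.cast_commute 2 b).mul_left hc)).sub_left (Commute.refl b)
  · rintro ⟨m, hm⟩
    -- a positive exponent is needed for `1 - (1 - y ^ k) ^ k` to be congruent to `y`
    obtain ⟨k, hk, hky⟩ : ∃ k : ℕ, k ≠ 0 ∧ (y - y ^ 2) ^ k = 0 :=
      ⟨m + 1, m.succ_ne_zero, by rw [pow_succ, hm, zero_mul]⟩
    have he := isIdempotentElem_one_sub_one_sub_pow_pow y k hky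
    obtain ⟨q, hq⟩ := sub_sq_dvd_sub_idempotent hk
    have hq' := congrArg (Polynomial.aeval y) hq
    simp only [map_sub, map_mul, map_pow, map_one, Polynomial.aeval_X] at hq'
    refine ⟨1 - (1 - y ^ k) ^ k, y - (1 - (1 - y ^ k) ^ k), he, ?_, ?_, by abel⟩
    · rw [hq']
      refine Commute.isNilpotent_mul_right ?_ ⟨k, hky⟩
      have hc := (Commute.all (Polynomial.X - Polynomial.X ^ 2) q).map (Polynomial.aeval y)
      rwa [map_sub, map_pow, Polynomial.aeval_X] at hc
    · have hc : Commute (1 - (1 - y ^ k) ^ k) y :=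
        (Commute.one_left y).sub_left
          (((Commute.one_left y).sub_left ((Commute.refl y).pow_left k)).pow_left k)
      exact hc.sub_right (Commute.refl _)

theorem IsStronglyNilClean.map {R S : Type*} [Ring R] [Ring S] (f : R →+* S) {x : R}
    (h : IsStronglyNilClean x) : IsStronglyNilClean (f x) := by
  obtain ⟨e, b, he, hb, hc, rfl⟩ := h
  exact ⟨f e, f b, he.map f, hb.map f, by rw [← map_mul, hc, map_mul], map_add f e b⟩

/-- Strong nil-cleanness lifts along a ring homomorphism with nil kernel. -/
theorem IsStronglyNilClean.of_map {R S : Type*} [Ring R] [Ring S] (f : R →+* S)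
    (hf : ∀ z, f z = 0 → IsNilpotent z) {x : R}
    (h : IsStronglyNilClean (f x)) : IsStronglyNilClean x := by
  rw [isStronglyNilClean_iff] at h ⊢
  obtain ⟨k, hk⟩ := h
  exact (hf ((x - x ^ 2) ^ k) (by simpa using hk)).of_pow

open DirectSum in
/-- Powers of an element without degree-zero part move up the degree filtration. -/
theorem decompose_pow_eq_zero {R : Type*} [Ring R] (A : ℕ → AddSubgroup R) [GradedRing A]
    {z : R} (hz : decompose A z 0 = 0) (k : ℕ) :
    ∀ j < k, decompose A (z ^ k) j = 0 := by
  classical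
  induction k with
  | zero => intro j hj; omega
  | succ k ih =>
    intro j hj
    rw [pow_succ, decompose_mul, ← ZeroMemClass.coe_eq_zero, DirectSum.coe_mul_apply]
    refine Finset.sum_eq_zero fun p hp => ?_
    have hp' : p.1 + p.2 = j := (Finset.mem_filter.mp hp).2
    rcases Nat.eq_zero_or_pos p.2 with h | h
    · rw [h, hz, ZeroMemClass.coe_zero, mul_zero]
    · rw [ih p.1 (by omega), ZeroMemClass.coe_zero, zero_mul]

open DirectSum in
theorem isNilpotent_of_decompose_zero {R : Type*} [Ring R] (A : ℕ → AddSubgroup R) [GradedRing A]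
    (n : ℕ) (hbound : ∀ i : ℕ, n < i → A i = ⊥) {z : R} (hz : decompose A z 0 = 0) :
    IsNilpotent z := by
  refine ⟨n + 1, (decompose A).injective ?_⟩
  rw [decompose_zero]
  refine DFinsupp.ext fun i => ?_
  rcases Nat.lt_or_ge i (n + 1) with hi | hi
  · exact decompose_pow_eq_zero A hz (n + 1) i hi
  · exact Subtype.ext (AddSubgroup.mem_bot.mp
      ((hbound i hi).le (decompose A (z ^ (n + 1)) i).2))

theorem strongly_unit_nil_clean_of_bounded_grading
    (R : Type*) [Ring R] (A : ℕ → AddSubgroup R) [GradedRing A]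
    (n : ℕ) (hbound : ∀ i : ℕ, n < i → A i = ⊥) :
    StronglyUnitNilClean R ↔ StronglyUnitNilClean (A 0) := by
  let π : R →+* A 0 := GradedRing.projZeroRingHom' A
  let ι : A 0 →+* R := SetLike.GradeZero.subring A |>.subtype
  have hπι : ∀ a, π (ι a) = a := GradedRing.projZeroRingHom'_apply_coe A
  have hker : ∀ z, π z = 0 → IsNilpotent z := fun z hz =>
    isNilpotent_of_decompose_zero A n hbound hz
  constructor
  · intro h a
    obtain ⟨u, hu⟩ := h (ι a)
    refine ⟨Units.map (π : R →* A 0) u, ?_⟩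
    have := hu.map π
    rwa [map_mul, hπι] at this
  · intro h x
    obtain ⟨u, hu⟩ := h (π x)
    refine ⟨Units.map (ι : A 0 →* R) u, IsStronglyNilClean.of_map π hker ?_⟩
    rw [map_mul]
    have : π (ι u) = u := hπι u
    exact this.symm ▸ hu
end

section
/- Let R be a semi-local ring (R/J(R) is a semisimple ring, where J(R) is the Jacobson radical) whose Jacobson radical J(R) is locally nilpotent, i.e., the non-unital subring generated by any finite subset of J(R) is nilpotent. Then for every n ≥ 1 the full matrix ring M_n(R) is strongly unit nil-clean. -/
universe u

/-- The Jacobson radical of a ring, described elementwise: `x ∈ J(R)` iff `1 - y * x` is a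
unit for every `y`. -/
def jacobsonRadicalSet (R : Type*) [Ring R] : Set R := {x : R | ∀ y : R, IsUnit (1 - y * x)}

/-- A ring `R` is *semi-local* if `R / J(R)` is semisimple, expressed via a surjective ring
homomorphism onto a semisimple ring whose kernel is exactly the Jacobson radical. -/
def IsSemilocalRing (R : Type u) [Ring R] : Prop :=
  ∃ (S : Type u) (_ : Ring S) (f : R →+* S),
    Function.Surjective f ∧ (∀ x : R, f x = 0 ↔ x ∈ jacobsonRadicalSet R) ∧ IsSemisimpleRing S

/-- Endomorphism rings of finite-dimensional spaces over division rings are unit-regular: for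
an endomorphism `f`, rank–nullity makes a complement of `range f` isomorphic to `ker f`, and this
isomorphism completes the inverse of `f` restricted to a complement of `ker f` to an
automorphism. -/
theorem exists_linearEquiv_mul_mul_eq {D V : Type*} [DivisionRing D] [AddCommGroup V] [Module D V]
    [FiniteDimensional D V] (f : V →ₗ[D] V) : ∃ u : V ≃ₗ[D] V, ∀ x, f (u (f x)) = f x := by
  obtain ⟨W, hW⟩ := (LinearMap.ker f).exists_isCompl
  obtain ⟨U, hU⟩ := (LinearMap.range f).exists_isCompl
  have hrank : Module.finrank D U = Module.finrank D (LinearMap.ker f) := by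
    have h1 := Submodule.finrank_add_eq_of_isCompl hU
    have h2 := f.finrank_range_add_finrank_ker
    omega
  let g : U ≃ₗ[D] LinearMap.ker f := LinearEquiv.ofFinrankEq _ _ hrank
  let r : W ≃ₗ[D] LinearMap.range f := f.kerComplementEquivRange hW.symm
  refine ⟨(Submodule.prodEquivOfIsCompl _ _ hU).symm ≪≫ₗ (r.symm.prodCongr g) ≪≫ₗ
    Submodule.prodEquivOfIsCompl _ _ hW.symm, fun x ↦ ?_⟩
  let y : LinearMap.range f := ⟨f x, LinearMap.mem_range_self f x⟩
  have hx : (Submodule.prodEquivOfIsCompl _ _ hU).symm (f x) = (y, 0) :=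
    Submodule.prodEquivOfIsCompl_symm_apply_left _ _ hU y
  have hr : f (r.symm y) = f x := congrArg Subtype.val (r.apply_symm_apply y)
  simp [hx, hr]

theorem unitRegular_matrix_divisionRing (D : Type*) [DivisionRing D] (d : ℕ) :
    UnitRegular (Matrix (Fin d) (Fin d) D) := by
  intro a
  obtain ⟨u, hu⟩ := exists_linearEquiv_mul_mul_eq (Matrix.toLinearMapRight' a)
  let φ := Matrix.toLinearMapRight' (R := D) (m := Fin d) (n := Fin d)
  have hφ (M N) : φ (M * N) = φ N ∘ₗ φ M := Matrix.toLinearMapRight'_mul M N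
  have hφ1 : φ 1 = LinearMap.id := Matrix.toLinearMapRight'_one
  refine ⟨⟨φ.symm u, φ.symm u.symm, ?_, ?_⟩, ?_⟩
  · apply φ.injective
    rw [hφ, hφ1, φ.apply_symm_apply, φ.apply_symm_apply]
    simp
  · apply φ.injective
    rw [hφ, hφ1, φ.apply_symm_apply, φ.apply_symm_apply]
    simp
  · apply φ.injective
    rw [hφ, hφ]
    change _ = φ a ∘ₗ φ (φ.symm u) ∘ₗ φ a
    rw [φ.apply_symm_apply]
    exact LinearMap.ext fun w ↦ (hu w).symm

theorem unitRegular_pi {ι : Type*} {A : ι → Type*} [∀ i, Ring (A i)]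
    (h : ∀ i, UnitRegular (A i)) : UnitRegular (∀ i, A i) := by
  intro a
  choose u hu using fun i ↦ h i (a i)
  exact ⟨MulEquiv.piUnits.symm u, funext hu⟩

theorem unitRegular_of_ringEquiv {A B : Type*} [Ring A] [Ring B] (e : A ≃+* B)
    (h : UnitRegular B) : UnitRegular A := by
  intro a
  obtain ⟨u, hu⟩ := h (e a)
  refine ⟨Units.map e.symm u, e.injective ?_⟩
  simpa using hu

/-- By Wedderburn–Artin, it suffices to consider matrix rings over division rings. -/
theorem unitRegular_of_isSemisimpleRing (A : Type*) [Ring A] [IsSemisimpleRing A] :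
    UnitRegular A := by
  obtain ⟨_, D, d, _, _, ⟨e⟩⟩ := IsSemisimpleRing.exists_ringEquiv_pi_matrix_divisionRing A
  exact unitRegular_of_ringEquiv e
    (unitRegular_pi fun i ↦ unitRegular_matrix_divisionRing (D i) (d i))

/-- If `y - y ^ 2` is nilpotent, then `y` is strongly nil-clean. The idempotent is
`1 - (1 - y ^ k) ^ k` for large `k`; its difference with `y` is the value at `y` of an integer
polynomial vanishing at `0` and `1`, hence a multiple of `y - y ^ 2`. -/
theorem isStronglyNilClean_of_isNilpotent_sub_sq {A : Type*} [Ring A] (y : A)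
    (hy : IsNilpotent (y - y ^ 2)) : IsStronglyNilClean y := by
  obtain ⟨k, hk⟩ := hy
  have hk' : (y - y ^ 2) ^ (k + 1) = 0 := by rw [pow_succ, hk, zero_mul]
  have hidem := isIdempotentElem_one_sub_one_sub_pow_pow y (k + 1) hk'
  let p : Polynomial ℤ := Polynomial.X - (1 - (1 - Polynomial.X ^ (k + 1)) ^ (k + 1))
  have hp0 : Polynomial.X ∣ p := by
    rw [Polynomial.X_dvd_iff, Polynomial.coeff_zero_eq_eval_zero]
    simp [p]
  have hp1 : Polynomial.X - 1 ∣ p := by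
    have : Polynomial.X - Polynomial.C (1 : ℤ) ∣ p := by
      rw [Polynomial.dvd_iff_isRoot]
      simp [p]
    simpa using this
  have hcop : IsCoprime (Polynomial.X : Polynomial ℤ) (Polynomial.X - 1) := ⟨1, -1, by ring⟩
  obtain ⟨q, hq⟩ := hcop.mul_dvd hp0 hp1
  have hval : y - (1 - (1 - y ^ (k + 1)) ^ (k + 1)) =
      (y - y ^ 2) * Polynomial.aeval y (-q) := by
    have hpq : p = (Polynomial.X - Polynomial.X ^ 2) * (-q) := by rw [hq]; ring
    simpa [p] using congrArg (Polynomial.aeval y) hpq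
  have hcomm : Commute (y - y ^ 2) (Polynomial.aeval y (-q)) := by
    have := (Commute.all (Polynomial.X - Polynomial.X ^ 2) (-q)).map (Polynomial.aeval y)
    simpa using this
  refine ⟨1 - (1 - y ^ (k + 1)) ^ (k + 1), y - (1 - (1 - y ^ (k + 1)) ^ (k + 1)), hidem, ?_, ?_, ?_⟩
  · rw [hval]
    exact hcomm.isNilpotent_mul_right ⟨k, hk⟩
  · have h1 : Commute (1 - (1 - y ^ (k + 1)) ^ (k + 1)) y :=
      (Commute.one_left y).sub_left
        (((Commute.one_left y).sub_left ((Commute.refl y).pow_left _)).pow_left _)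
    exact h1.sub_right (Commute.refl _)
  · abel

/-- The entries of `M` lie in a nilpotent non-unital subring `T`, say with all products of `m`
elements of `T` zero. Every entry of `M ^ m` is a sum of such products. -/
theorem isNilpotent_matrix_of_isLocallyNilpotentSet {R : Type*} [Ring R] {S : Set R}
    (hS : IsLocallyNilpotentSet S) {n : ℕ} (M : Matrix (Fin n) (Fin n) R)
    (hM : ∀ i j, M i j ∈ S) : IsNilpotent M := by
  classical
  let F : Finset R := Finset.univ.image fun ij : Fin n × Fin n ↦ M ij.1 ij.2
  obtain ⟨m, -, hm⟩ := hS F (by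
    intro x hx
    obtain ⟨ij, -, rfl⟩ := Finset.mem_image.1 hx
    exact hM _ _)
  have hMF (i j) : M i j ∈ (NonUnitalSubring.closure (F : Set R) : Set R) :=
    NonUnitalSubring.subset_closure (Finset.mem_coe.2
      (Finset.mem_image.2 ⟨(i, j), Finset.mem_univ _, rfl⟩))
  -- A product of `m - k` elements of the subring annihilates every entry of `M ^ k`.
  have key : ∀ (k : ℕ) (l : List R),
      (∀ a ∈ l, a ∈ (NonUnitalSubring.closure (F : Set R) : Set R)) → l.length + k = m →
      ∀ i j, l.prod * (M ^ k) i j = 0 := by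
    intro k
    induction k with
    | zero =>
      intro l hl hlen i j
      rw [hm l hl (by simpa using hlen), zero_mul]
    | succ k ih =>
      intro l hl hlen i j
      rw [pow_succ', Matrix.mul_apply, Finset.mul_sum]
      refine Finset.sum_eq_zero fun a _ ↦ ?_
      have := ih (l ++ [M i a]) (by
        intro b hb
        rcases List.mem_append.1 hb with hb | hb
        · exact hl b hb
        · rw [List.mem_singleton.1 hb]
          exact hMF i a) (by simp; omega) a j
      simpa [mul_assoc] using this
  refine ⟨m, ?_⟩
  ext i j
  simpa using key m [] (by simp) (by simp) i j

theorem isUnit_of_map_of_nil_ker {A B : Type*} [Ring A] [Ring B] (g : A →+* B)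
    (hg : Function.Surjective g) (hker : ∀ x, g x = 0 → IsNilpotent x) (a : A)
    (ha : IsUnit (g a)) : IsUnit a := by
  have unip (c : A) (hc : g c = 1) : IsUnit c := by
    have := (hker (1 - c) (by simp [hc])).isUnit_one_sub
    rwa [sub_sub_cancel] at this
  obtain ⟨v, hv⟩ := ha
  obtain ⟨b, hb⟩ := hg (↑v⁻¹ : B)
  obtain ⟨s, hs⟩ := unip (a * b) (by rw [map_mul, hb, ← hv, Units.mul_inv])
  obtain ⟨t, ht⟩ := unip (b * a) (by rw [map_mul, hb, ← hv, Units.inv_mul])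
  refine isUnit_iff_exists_and_exists.2 ⟨⟨b * ↑s⁻¹, ?_⟩, ⟨↑t⁻¹ * b, ?_⟩⟩
  · rw [← mul_assoc, ← hs, Units.mul_inv]
  · rw [mul_assoc, ← ht, Units.inv_mul]

/-- Strongly unit nil-cleanness lifts from a unit-regular ring along a surjection with nil
kernel: if `g x = g x * v * g x` and `u` is a unit lifting `v`, then `u * x` is idempotent modulo
the kernel. -/
theorem stronglyUnitNilClean_of_nil_ker {A B : Type*} [Ring A] [Ring B] (g : A →+* B)
    (hg : Function.Surjective g) (hker : ∀ x, g x = 0 → IsNilpotent x)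
    (hB : UnitRegular B) : StronglyUnitNilClean A := by
  intro x
  obtain ⟨v, hv⟩ := hB (g x)
  obtain ⟨a, ha⟩ := hg v
  obtain ⟨u, rfl⟩ := isUnit_of_map_of_nil_ker g hg hker a (ha ▸ v.isUnit)
  refine ⟨u, isStronglyNilClean_of_isNilpotent_sub_sq _ (hker _ ?_)⟩
  have hidem : (v : B) * g x * (v * g x) = v * g x := by
    rw [mul_assoc, ← mul_assoc (g x), ← hv]
  rw [map_sub, map_pow, map_mul, ha, pow_two, hidem, sub_self]

theorem matrix_stronglyUnitNilClean_of_semilocal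
    (R : Type u) [Ring R] (hsl : IsSemilocalRing R)
    (hJ : IsLocallyNilpotentSet (jacobsonRadicalSet R))
    (n : ℕ) (hn : 1 ≤ n) :
    StronglyUnitNilClean (Matrix (Fin n) (Fin n) R) := by
  obtain ⟨S, _, f, hf, hker, _⟩ := hsl
  refine stronglyUnitNilClean_of_nil_ker (f.mapMatrix (m := Fin n)) ?_ ?_
    (unitRegular_of_isSemisimpleRing _)
  · intro N
    choose M hM using fun i j ↦ hf (N i j)
    exact ⟨Matrix.of M, by ext i j; exact hM i j⟩
  · intro M hM
    exact isNilpotent_matrix_of_isLocallyNilpotentSet hJ M fun i j ↦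
      (hker _).1 (congrFun (congrFun hM i) j)
end

section
/- Let n > 1 be a natural number and G a group. The group ring (ℤ/nℤ)G is unit-regular if and only if n is squarefree and G is locally finite (every finitely generated subgroup of G is finite) with the order of every element of G coprime to n (gcd(n, orderOf g) = 1 for all g ∈ G). -/
open MonoidAlgebra

/-! ### Finite semisimple rings are unit-regular -/

theorem UnitRegular.of_ringEquiv {R S : Type*} [Ring R] [Ring S] (e : R ≃+* S)
    (h : UnitRegular S) : UnitRegular R := by
  intro a
  obtain ⟨u, hu⟩ := h (e a)
  refine ⟨Units.map e.symm.toMonoidHom u, ?_⟩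
  apply e.injective
  simpa using hu

theorem UnitRegular.pi {ι : Type*} {R : ι → Type*} [∀ i, Ring (R i)]
    (h : ∀ i, UnitRegular (R i)) : UnitRegular (∀ i, R i) := by
  intro a
  choose u hu using fun i ↦ h i (a i)
  exact ⟨MulEquiv.piUnits.symm u, funext hu⟩

/-- By Gaussian elimination `A = P D Q` with `P`, `Q` invertible and `D` diagonal, and if
`D = D U D` with `U` a unit then `Q⁻¹ U P⁻¹` serves for `A`. -/
theorem unitRegular_matrix {K : Type*} [Field K] (m : ℕ) :
    UnitRegular (Matrix (Fin m) (Fin m) K) := by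
  classical
  intro A
  obtain ⟨L, L', D, rfl⟩ := Matrix.Pivot.exists_list_transvec_mul_diagonal_mul_list_transvec A
  have hL (L : List (Matrix.TransvectionStruct (Fin m) K)) :
      IsUnit (L.map Matrix.TransvectionStruct.toMatrix).prod := by
    rw [Matrix.isUnit_iff_isUnit_det, Matrix.TransvectionStruct.det_toMatrix_prod]
    exact isUnit_one
  obtain ⟨P, hP⟩ := hL L
  obtain ⟨Q, hQ⟩ := hL L'
  rw [← hP, ← hQ]
  -- Invert the nonzero diagonal entries, and put `1` in place of the zero ones.
  let d : Fin m → K := fun i ↦ if D i = 0 then 1 else (D i)⁻¹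
  have hd : IsUnit (Matrix.diagonal d) := by
    rw [Matrix.isUnit_iff_isUnit_det, Matrix.det_diagonal, isUnit_iff_ne_zero,
      Finset.prod_ne_zero_iff]
    intro i _
    by_cases h : D i = 0 <;> simp [d, h]
  obtain ⟨U, hU⟩ := hd
  refine ⟨Q⁻¹ * U * P⁻¹, ?_⟩
  have hDUD : Matrix.diagonal D * (U : Matrix _ _ K) * Matrix.diagonal D = Matrix.diagonal D := by
    rw [hU, Matrix.diagonal_mul_diagonal, Matrix.diagonal_mul_diagonal]
    congr 1
    ext i
    by_cases h : D i = 0 <;> simp [d, h]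
  calc (P : Matrix (Fin m) (Fin m) K) * Matrix.diagonal D * (Q : Matrix (Fin m) (Fin m) K)
      = (P : Matrix (Fin m) (Fin m) K) * (Matrix.diagonal D * (U : Matrix (Fin m) (Fin m) K) *
          Matrix.diagonal D) * (Q : Matrix (Fin m) (Fin m) K) := by rw [hDUD]
    _ = _ := by simp [mul_assoc]

/-- By Wedderburn–Artin the ring is a product of matrix rings over division rings; these are
finite, hence fields by Wedderburn's little theorem. -/
theorem unitRegular_of_finite_of_isSemisimpleRing (R : Type*) [Ring R] [Finite R]
    [IsSemisimpleRing R] : UnitRegular R := by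
  obtain ⟨m, D, d, hD, hd, ⟨e⟩⟩ := IsSemisimpleRing.exists_ringEquiv_pi_matrix_divisionRing R
  refine UnitRegular.of_ringEquiv e (UnitRegular.pi fun i ↦ ?_)
  have : Finite (D i) := by
    refine Finite.of_surjective (fun r : R ↦ e r i 0 0) fun x ↦ ?_
    obtain ⟨r, hr⟩ := e.surjective (fun j ↦ Matrix.of fun _ _ ↦ if h : j = i then h ▸ x else 0)
    exact ⟨r, by simp [hr]⟩
  let _ : Field (D i) := littleWedderburn (D i)
  exact unitRegular_matrix (K := D i) (d i)

/-! ### Maschke's theorem over a semisimple coefficient ring -/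

/-- Averaging a `k`-linear projection onto a left ideal over `G` gives a `k[G]`-linear one. -/
theorem isSemisimpleRing_monoidAlgebra {k G : Type*} [CommRing k] [IsSemisimpleRing k]
    [Group G] [Finite G] (hG : IsUnit (Nat.card G : k)) :
    IsSemisimpleRing (MonoidAlgebra k G) := by
  have _ : Fintype G := Fintype.ofFinite G
  refine (isSemisimpleModule_iff _ _).2 ⟨fun p ↦ ?_⟩
  obtain ⟨π, hπ⟩ := IsSemisimpleModule.extension_property (p.subtype.restrictScalars k)
    p.subtype_injective .id
  exact ⟨_, LinearMap.isCompl_of_proj (f := π.equivariantProjection G)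
    (π.equivariantProjection_condition G p.subtype hG fun v ↦ DFunLike.congr_fun hπ v)⟩

/-- An element of `(ℤ/nℤ)G` lies in `(ℤ/nℤ)H`, where `H` is the finite subgroup generated by its
support. By Cauchy's theorem `|H|` is prime to `n`, so `(ℤ/nℤ)H` is finite and semisimple. -/
theorem unitRegular_of_locallyFinite {n : ℕ} (hn : 1 < n) {G : Type*} [Group G]
    (hsq : Squarefree n) (hfin : LocallyFiniteGroup G)
    (hord : ∀ g : G, Nat.gcd n (orderOf g) = 1) : UnitRegular (MonoidAlgebra (ZMod n) G) := by
  have : NeZero n := ⟨by omega⟩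
  intro a
  let H : Subgroup G := Subgroup.closure a.coeff.support
  have : Finite H := hfin H ⟨_, rfl⟩
  have hcard : IsUnit (Nat.card H : ZMod n) := by
    rw [ZMod.isUnit_iff_coprime, Nat.coprime_iff_gcd_eq_one]
    by_contra hne
    obtain ⟨p, hp, hpd⟩ := Nat.exists_prime_and_dvd hne
    have := Fact.mk hp
    obtain ⟨g, hg⟩ := exists_prime_orderOf_dvd_card' (G := H) p
      (hpd.trans (Nat.gcd_dvd_left _ _))
    have h1 := hord g
    rw [Subgroup.orderOf_coe, hg] at h1
    exact hp.one_lt.ne'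
      (Nat.dvd_one.1 (h1 ▸ Nat.dvd_gcd (hpd.trans (Nat.gcd_dvd_right _ _)) dvd_rfl))
  have : Fact (Squarefree n) := ⟨hsq⟩
  have : IsSemisimpleRing (ZMod n) := IsArtinianRing.isSemisimpleRing_of_isReduced _
  have := isSemisimpleRing_monoidAlgebra hcard
  have : Finite (MonoidAlgebra (ZMod n) H) :=
    Finite.of_injective (fun x h ↦ x.coeff h) fun x y h ↦ by ext g; exact congrFun h g
  have ha : MonoidAlgebra.mapDomain H.subtype (MonoidAlgebra.comapDomain H.subtype
      H.subtype_injective a) = a :=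
    MonoidAlgebra.mapDomain_comapDomain (by
      rw [Subgroup.coe_subtype, Subtype.range_coe]; exact Subgroup.subset_closure) _
  obtain ⟨u, hu⟩ := unitRegular_of_finite_of_isSemisimpleRing (MonoidAlgebra (ZMod n) H)
    (MonoidAlgebra.comapDomain H.subtype H.subtype_injective a)
  refine ⟨Units.map (MonoidAlgebra.mapDomainRingHom (ZMod n) H.subtype).toMonoidHom u, ?_⟩
  have := congrArg (MonoidAlgebra.mapDomainRingHom (ZMod n) H.subtype) hu
  rw [map_mul, map_mul] at this
  change MonoidAlgebra.mapDomain _ _ = MonoidAlgebra.mapDomain _ _ * _ *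
    MonoidAlgebra.mapDomain _ _ at this
  rw [ha] at this
  exact this

/-! ### Consequences of unit-regularity -/

/-- Scalars are central, so a scalar `x` with `x ^ 2 = 0` satisfies `x = x u x = x ^ 2 u = 0`. -/
theorem isReduced_of_unitRegular {k G : Type*} [CommRing k] [Group G]
    (h : UnitRegular (MonoidAlgebra k G)) : IsReduced k := by
  refine (isReduced_iff_pow_one_lt 2 one_lt_two).2 fun x hx ↦ ?_
  obtain ⟨u, hu⟩ := h (single 1 x)
  have hz : (single 1 x : MonoidAlgebra k G) = 0 := by
    rw [hu, mul_assoc, ← (MonoidAlgebra.single_one_comm x (u : MonoidAlgebra k G)), ← mul_assoc,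
      single_mul_single, ← pow_two x, hx, single_zero, zero_mul]
  exact single_eq_zero.1 hz

/-- The augmentation map `k[G] → k`, sending every group element to `1`. -/
noncomputable def augmentation (k G : Type*) [CommRing k] [Group G] : MonoidAlgebra k G →ₐ[k] k :=
  MonoidAlgebra.lift k k G 1

theorem augmentation_apply {k G : Type*} [CommRing k] [Group G] (x : MonoidAlgebra k G) :
    augmentation k G x = ∑ g ∈ x.coeff.support, x.coeff g := by
  simp [augmentation, MonoidAlgebra.lift_apply, Finsupp.sum]

/-- Over a (von Neumann) regular group ring, any finite family of group elements is
simultaneously fixed, by right multiplication, by an element of augmentation `1`. -/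
theorem exists_augmentation_eq_one {k G : Type*} [CommRing k] [Group G]
    (h : UnitRegular (MonoidAlgebra k G)) (S : Finset G) :
    ∃ y : MonoidAlgebra k G, augmentation k G y = 1 ∧ ∀ g ∈ S, y * single g 1 = y := by
  classical
  induction S using Finset.induction_on with
  | empty => exact ⟨1, map_one _, by simp⟩
  | insert g S _ ih =>
    obtain ⟨y, hy, hS⟩ := ih
    -- With `a = y (g - 1)` and `a = a u a`, left multiplication by `1 - a u` kills `a`.
    obtain ⟨u, hu⟩ := h (y * (single g 1 - 1))
    have ha : augmentation k G (y * (single g 1 - 1)) = 0 := by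
      simp [augmentation, MonoidAlgebra.lift_single]
    have hg : ∀ t, (1 - y * (single g 1 - 1) * (u : MonoidAlgebra k G)) * y * single t 1 -
        (1 - y * (single g 1 - 1) * (u : MonoidAlgebra k G)) * y =
        (1 - y * (single g 1 - 1) * (u : MonoidAlgebra k G)) * (y * single t 1 - y) := by
      intro t; noncomm_ring
    refine ⟨(1 - y * (single g 1 - 1) * (u : MonoidAlgebra k G)) * y, ?_, fun t ht ↦ ?_⟩
    · rw [map_mul, map_sub, map_mul, ha, hy]
      simp
    · rw [← sub_eq_zero, hg]
      obtain rfl | ht := Finset.mem_insert.1 ht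
      · rw [show y * single t 1 - y = y * (single t 1 - 1) by rw [mul_sub, mul_one], sub_mul,
          one_mul, ← hu, sub_self]
      · rw [hS t ht, sub_self, mul_zero]

theorem mul_single_eq_of_mem_closure {k G : Type*} [CommRing k] [Group G]
    {y : MonoidAlgebra k G} {S : Set G} (hS : ∀ g ∈ S, y * single g 1 = y) :
    ∀ g ∈ Subgroup.closure S, y * single g 1 = y := by
  intro g hg
  induction hg using Subgroup.closure_induction with
  | mem g hg => exact hS g hg
  | one => rw [← one_def, mul_one]
  | mul a b _ _ ha hb =>
    rw [← one_mul (1 : k), ← single_mul_single, ← mul_assoc, ha, hb]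
  | inv a _ ha =>
    nth_rw 1 [← ha]
    rw [mul_assoc, single_mul_single, mul_inv_cancel, one_mul, ← one_def, mul_one]

theorem coeff_mul_right_of_fixed {k G : Type*} [CommRing k] [Group G]
    {y : MonoidAlgebra k G} {g : G} (h : y * single g 1 = y) (x : G) :
    y.coeff (x * g) = y.coeff x := by
  nth_rw 1 [← h]
  simp [coeff_mul_single_apply]

/-- An element fixed by right multiplication by `H` has support stable under `H`; as `H` acts
freely on this finite nonempty set, `H` is finite. -/
theorem locallyFinite_of_unitRegular {k G : Type*} [CommRing k] [Nontrivial k] [Group G]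
    (h : UnitRegular (MonoidAlgebra k G)) : LocallyFiniteGroup G := by
  rintro _ ⟨S, rfl⟩
  obtain ⟨y, hy, hS⟩ := exists_augmentation_eq_one h S
  have hS := mul_single_eq_of_mem_closure (S := (S : Set G)) hS
  have hy0 : y ≠ 0 := by rintro rfl; simp at hy
  obtain ⟨x, hx⟩ := Finsupp.support_nonempty_iff.2 (MonoidAlgebra.coeff_eq_zero.not.2 hy0)
  refine Set.Finite.of_injOn (f := (x * ·)) (t := (y.coeff.support : Set G)) (fun g hg ↦ ?_)
    (mul_right_injective x).injOn (Finset.finite_toSet _)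
  simpa [coeff_mul_right_of_fixed (hS g hg)] using hx

/-- An element `y` of augmentation `1` fixed by `g` is constant on the left cosets of `⟨g⟩`, so
summing its coefficients coset by coset shows that the order of `g` divides `1` in `k`. -/
theorem isUnit_orderOf_of_unitRegular {k G : Type*} [CommRing k] [Nontrivial k] [Group G]
    (h : UnitRegular (MonoidAlgebra k G)) (g : G) : IsUnit (orderOf g : k) := by
  classical
  obtain ⟨y, hy, hS⟩ := exists_augmentation_eq_one h {g}
  let H := Subgroup.zpowers g
  have hH : ∀ t ∈ H, y * single t 1 = y := by
    have := mul_single_eq_of_mem_closure (S := {g}) (y := y) (by simpa using hS)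
    rwa [← Subgroup.zpowers_eq_closure] at this
  have : Finite H := locallyFinite_of_unitRegular h H ⟨{g}, by
    simp [H, Subgroup.zpowers_eq_closure]⟩
  have _ : Fintype H := Fintype.ofFinite H
  rw [isUnit_iff_dvd_one, ← hy, augmentation_apply,
    ← Finset.sum_fiberwise_of_maps_to (g := fun x : G ↦ (x : G ⧸ H)) fun x hx ↦
      Finset.mem_image_of_mem _ hx]
  refine Finset.dvd_sum fun q hq ↦ ?_
  obtain ⟨x, hx, rfl⟩ := Finset.mem_image.1 hq
  -- The fibre over `x H` is the whole coset, on which `y` is constant.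
  have hfib : y.coeff.support.filter (fun z : G ↦ (z : G ⧸ H) = x) =
      Finset.univ.image fun t : H ↦ x * (t : G) := by
    ext z
    simp only [Finset.mem_filter, Finset.mem_image, Finset.mem_univ, true_and]
    constructor
    · rintro ⟨-, hz⟩
      exact ⟨⟨x⁻¹ * z, QuotientGroup.eq.1 hz.symm⟩, by simp⟩
    · rintro ⟨t, rfl⟩
      refine ⟨?_, by simp⟩
      simpa [coeff_mul_right_of_fixed (hH t t.2)] using hx
  rw [hfib, Finset.sum_image fun a _ b _ hab ↦ Subtype.ext (mul_left_cancel hab)]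
  simp only [coeff_mul_right_of_fixed (hH _ (Subtype.prop _))]
  rw [Finset.sum_const, Finset.card_univ, Fintype.card_eq_nat_card, Nat.card_zpowers, nsmul_eq_mul]
  exact dvd_mul_right _ _

theorem zmod_monoidAlgebra_unitRegular_iff (n : ℕ) (hn : 1 < n) (G : Type*) [Group G] :
    UnitRegular (MonoidAlgebra (ZMod n) G) ↔
      Squarefree n ∧ LocallyFiniteGroup G ∧ ∀ g : G, Nat.gcd n (orderOf g) = 1 := by
  have : Fact (1 < n) := ⟨hn⟩
  refine ⟨fun h ↦ ⟨?_, locallyFinite_of_unitRegular h, fun g ↦ ?_⟩,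
    fun ⟨hsq, hfin, hord⟩ ↦ unitRegular_of_locallyFinite hn hsq hfin hord⟩
  · exact (isReduced_zmod.1 (isReduced_of_unitRegular h)).resolve_right (by omega)
  · rw [Nat.gcd_comm]
    exact (ZMod.isUnit_iff_coprime _ _).1 (isUnit_orderOf_of_unitRegular h g)
end

section
/- Let R be a periodic ring that is right (or left) noetherian and let G be a locally finite group (every finitely generated subgroup of G is finite). Then the group ring RG is periodic. -/
/-- A ring is *periodic* if every element satisfies `a ^ m = a ^ n` for some distinct
positive integers `m ≠ n`. -/
def IsPeriodicRing (R : Type*) [Ring R] : Prop :=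
  ∀ a : R, ∃ m n : ℕ, 0 < m ∧ 0 < n ∧ m ≠ n ∧ a ^ m = a ^ n

open Polynomial

/-! ### Periodicity and integrality over `ℤ` -/

namespace IsPeriodicRing

theorem of_injective {R S : Type*} [Ring R] [Ring S] (f : R →+* S)
    (hf : Function.Injective f) (hS : IsPeriodicRing S) : IsPeriodicRing R := by
  intro a
  obtain ⟨m, n, hm, hn, hmn, h⟩ := hS (f a)
  exact ⟨m, n, hm, hn, hmn, hf (by simpa using h)⟩

theorem of_surjective {R S : Type*} [Ring R] [Ring S] (f : R →+* S)
    (hf : Function.Surjective f) (hR : IsPeriodicRing R) : IsPeriodicRing S := by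
  intro a
  obtain ⟨b, rfl⟩ := hf a
  obtain ⟨m, n, hm, hn, hmn, h⟩ := hR b
  exact ⟨m, n, hm, hn, hmn, by rw [← map_pow, h, map_pow]⟩

theorem exists_lt {R : Type*} [Ring R] (hR : IsPeriodicRing R) (a : R) :
    ∃ m n : ℕ, 0 < m ∧ m < n ∧ a ^ m = a ^ n := by
  obtain ⟨m, n, hm, hn, hmn, h⟩ := hR a
  rcases lt_or_gt_of_ne hmn with h' | h'
  · exact ⟨m, n, hm, h', h⟩
  · exact ⟨n, m, hn, h', h.symm⟩

/-- A periodic ring has positive characteristic, because `2 ^ m = 2 ^ n` for some `m < n`. -/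
theorem exists_natCast_eq_zero {R : Type*} [Ring R] (hR : IsPeriodicRing R) :
    ∃ N : ℕ, 0 < N ∧ (N : R) = 0 := by
  obtain ⟨m, n, -, hmn, h⟩ := hR.exists_lt 2
  have hlt : 2 ^ m < 2 ^ n := Nat.pow_lt_pow_right (by norm_num) hmn
  refine ⟨2 ^ n - 2 ^ m, by omega, ?_⟩
  rw [Nat.cast_sub hlt.le]
  simp [h]

theorem isIntegral {R : Type*} [Ring R] (hR : IsPeriodicRing R) (a : R) : IsIntegral ℤ a := by
  obtain ⟨m, n, -, hmn, h⟩ := hR.exists_lt a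
  refine ⟨X ^ n - X ^ m, monic_X_pow_sub (by simpa using hmn), ?_⟩
  simp [h]

/-- Every element of a periodic ring has an idempotent power. -/
theorem exists_isIdempotentElem_pow {R : Type*} [Ring R] (hR : IsPeriodicRing R) (a : R) :
    ∃ k : ℕ, 0 < k ∧ IsIdempotentElem (a ^ k) := by
  obtain ⟨m, n, hm, hmn, h⟩ := hR.exists_lt a
  obtain ⟨d, rfl⟩ := Nat.exists_eq_add_of_lt hmn
  have key : ∀ j i : ℕ, a ^ (m + i + j * (d + 1)) = a ^ (m + i) := by
    intro j i
    induction j with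
    | zero => simp
    | succ j ih =>
      rw [← ih, show m + i + (j + 1) * (d + 1) = (m + d + 1) + (i + j * (d + 1)) by ring, pow_add,
        ← h, ← pow_add]
      congr 1
      ring
  refine ⟨m * (d + 1), by positivity, ?_⟩
  have := key m (m * d)
  rw [IsIdempotentElem, ← pow_add]
  convert this using 2 <;> ring

end IsPeriodicRing

/-- In positive characteristic `N`, an integral element generates a subring that is a finitely
generated torsion abelian group. -/
theorem finite_adjoin_of_isIntegral {A : Type*} [Ring A] {N : ℕ} (hN : 0 < N)
    (h0 : (N : A) = 0) {x : A} (hx : IsIntegral ℤ x) :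
    Finite (Algebra.adjoin ℤ {x}) := by
  have : Module.Finite ℤ (Algebra.adjoin ℤ {x}) :=
    Module.Finite.iff_fg.mpr hx.fg_adjoin_singleton
  refine Module.finite_of_fg_torsion _ ?_
  intro y
  refine ⟨⟨(N : ℤ), mem_nonZeroDivisors_of_ne_zero (by exact_mod_cast hN.ne')⟩, ?_⟩
  ext
  simp [Submonoid.smul_def, h0]

/-- Together with `IsPeriodicRing.exists_natCast_eq_zero` and `IsPeriodicRing.isIntegral` this
characterizes periodic rings as the rings of positive characteristic that are integral over
`ℤ`. -/
theorem isPeriodicRing_of_isIntegral {A : Type*} [Ring A] [inst : Algebra ℤ A] {N : ℕ} (hN : 0 < N)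
    (h0 : (N : A) = 0) (h : ∀ x : A, IsIntegral ℤ x) : IsPeriodicRing A := by
  -- `ℤ`-algebra structures are unique, but not all instances are definitionally equal.
  obtain rfl : inst = Ring.toIntAlgebra A := Subsingleton.elim _ _
  intro x
  have := finite_adjoin_of_isIntegral hN h0 (h x)
  let y : Algebra.adjoin ℤ {x} := ⟨x, Algebra.self_mem_adjoin_singleton ℤ x⟩
  obtain ⟨m, n, hmn, heq⟩ := Finite.exists_ne_map_eq_of_infinite fun k : ℕ => y ^ (k + 1)
  refine ⟨m + 1, n + 1, by omega, by omega, by omega, ?_⟩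
  simpa [y] using congrArg Subtype.val heq

/-! ### Periodic division rings -/

/-- On a vector space over a finite field with `q` elements, an operator with `T ^ q = T` is
diagonalizable. So either it is a prescribed scalar `μ`, or it has an eigenvector with
eigenvalue different from `μ`. -/
theorem exists_eigenvector_of_pow_card_eq {K V : Type*} [Field K] [Fintype K] [AddCommGroup V]
    [Module K V] (T : Module.End K V) (hT : T ^ Fintype.card K = T) (μ : K) :
    (∀ v, T v = μ • v) ∨ ∃ c, c ≠ μ ∧ ∃ v, v ≠ 0 ∧ T v = c • v := by
  classical
  by_contra! hcon
  obtain ⟨⟨w, hw⟩, hcon⟩ := hcon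
  have hprod : (X ^ Fintype.card K - X : K[X]) = ∏ c : K, (X - C c) := by
    have hroots := FiniteField.roots_X_pow_card_sub_X K
    have hmonic : (X ^ Fintype.card K - X : K[X]).Monic :=
      monic_X_pow_sub (by simpa using Fintype.one_lt_card (α := K))
    have := prod_multiset_X_sub_C_of_monic_of_roots_card_eq hmonic (by
      rw [hroots, FiniteField.X_pow_card_sub_X_natDegree_eq K Fintype.one_lt_card]; rfl)
    rw [← this, hroots]
    rfl
  have hinj : ∀ s : Finset K, μ ∉ s → ∀ v, aeval T (∏ c ∈ s, (X - C c)) v = 0 → v = 0 := by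
    intro s
    induction s using Finset.induction_on with
    | empty => intro _ v hv; simpa using hv
    | insert c s hc ih =>
      intro hμ v hv
      rw [Finset.prod_insert hc, map_mul, Module.End.mul_apply] at hv
      apply ih (by grind) v
      by_contra hne
      refine hcon c (by grind) _ hne ?_
      simpa [sub_eq_zero] using hv
  have hzero : aeval T (X ^ Fintype.card K - X : K[X]) = 0 := by simp [hT]
  rw [hprod, ← Finset.prod_erase_mul _ _ (Finset.mem_univ μ), map_mul] at hzero
  refine hw (sub_eq_zero.mp (hinj _ (Finset.notMem_erase μ Finset.univ) _ ?_))
  have := LinearMap.congr_fun hzero w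
  simpa using this

/-- If `x` normalizes (up to inclusion) a finite subfield `f K` of a periodic division ring, then
the left `K`-span of the powers of `x` is a finite subring, hence commutative by Wedderburn's
little theorem. -/
theorem commute_of_normalizes {D K : Type*} [DivisionRing D] (hD : IsPeriodicRing D) [Field K]
    [Finite K] (f : K →+* D) (x : D) (hx : ∀ c : K, ∃ c' : K, x * f c = f c' * x) (c : K) :
    x * f c = f c * x := by
  let _ : Module K D := Module.compHom D f
  have hsmul : ∀ (c : K) (d : D), c • d = f c * d := fun _ _ => rfl
  let S : Submodule K D := Submodule.span K (Set.range fun k : ℕ => x ^ k)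
  have hpow : ∀ k, x ^ k ∈ S := fun k => Submodule.subset_span ⟨k, rfl⟩
  have hfin : (Set.range fun k : ℕ => x ^ k).Finite := by
    obtain ⟨m, n, hm, hmn, h⟩ := hD.exists_lt x
    refine ((Set.finite_Iio n).image fun k : ℕ => x ^ k).subset ?_
    rintro _ ⟨k, rfl⟩
    induction k using Nat.strong_induction_on with
    | _ k ih =>
      by_cases hk : k < n
      · exact ⟨k, hk, rfl⟩
      · have : x ^ k = x ^ (k - n + m) := by
          conv_lhs => rw [show k = k - n + n by omega, pow_add, ← h, ← pow_add]
        simp only [this]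
        exact ih _ (by omega)
  have hSfin : Finite S := by
    have : Module.Finite K S := Module.Finite.span_of_finite K hfin
    exact Module.finite_of_finite K
  have hxmul : ∀ v ∈ S, x * v ∈ S := by
    intro v hv
    induction hv using Submodule.span_induction with
    | mem v hv =>
      obtain ⟨k, rfl⟩ := hv
      simpa [pow_succ'] using hpow (k + 1)
    | zero => simp
    | add u v _ _ hu hv => rw [mul_add]; exact S.add_mem hu hv
    | smul c v _ hv =>
      obtain ⟨c', hc'⟩ := hx c
      rw [hsmul, ← mul_assoc, hc', mul_assoc, ← hsmul]
      exact S.smul_mem _ hv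
  have hmul : ∀ u ∈ S, ∀ v ∈ S, u * v ∈ S := by
    intro u hu v hv
    induction hu using Submodule.span_induction with
    | mem u hu =>
      obtain ⟨k, rfl⟩ := hu
      induction k with
      | zero => simpa using hv
      | succ k ih =>
        simp only [pow_succ', mul_assoc]
        exact hxmul _ ih
    | zero => simp
    | add u u' _ _ hu hu' => rw [add_mul]; exact S.add_mem hu hu'
    | smul c u _ hu =>
      rw [hsmul, mul_assoc, ← hsmul]
      exact S.smul_mem _ hu
  let A : Subring D :=
    { carrier := S
      mul_mem' := fun {a b} ha hb => hmul a ha b hb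
      one_mem' := by simpa using hpow 0
      add_mem' := S.add_mem
      zero_mem' := S.zero_mem
      neg_mem' := S.neg_mem }
  have : Finite A := hSfin
  have hfield := Finite.isDomain_to_isField A
  have h1 : x ∈ A := show x ∈ S by simpa using hpow 1
  have h2 : f c ∈ A := show f c ∈ S by simpa [hsmul] using S.smul_mem c (hpow 0)
  exact congrArg Subtype.val (hfield.mul_comm ⟨x, h1⟩ ⟨f c, h2⟩)

/-- Jacobson's theorem: a periodic division ring is commutative. A noncentral `a` generates a
finite field `K`; right multiplication by `a` is diagonalizable over `K`, and an eigenvector `x`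
for an eigenvalue different from `a` satisfies `x * a * x⁻¹ ∈ K`. -/
theorem IsPeriodicRing.mul_comm_of_divisionRing {D : Type*} [DivisionRing D]
    (hD : IsPeriodicRing D) (a b : D) : a * b = b * a := by
  obtain ⟨N, hN, h0⟩ := hD.exists_natCast_eq_zero
  have hfin := finite_adjoin_of_isIntegral hN h0 (hD.isIntegral a)
  let _ : Field (Algebra.adjoin ℤ {a}) :=
    (Finite.isDomain_to_isField (Algebra.adjoin ℤ {a})).toField
  let K := Algebra.adjoin ℤ {a}
  let _ := Fintype.ofFinite K
  let f : K →+* D := K.val.toRingHom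
  have hf : Function.Injective f := Subtype.val_injective
  let α : K := ⟨a, Algebra.self_mem_adjoin_singleton ℤ a⟩
  have hα : f α = a := rfl
  let _ : Module K D := Module.compHom D f
  have hsmul : ∀ (c : K) (d : D), c • d = f c * d := fun _ _ => rfl
  let T : Module.End K D :=
    { toFun := fun d => d * a
      map_add' := fun _ _ => add_mul _ _ _
      map_smul' := fun c d => mul_assoc (f c) d a }
  have hTpow : ∀ (k : ℕ) (d : D), (T ^ k) d = d * a ^ k := by
    intro k
    induction k with
    | zero => simp
    | succ k ih =>
      intro d
      rw [pow_succ, Module.End.mul_apply, ih, pow_succ', ← mul_assoc]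
      rfl
  have hT : T ^ Fintype.card K = T := by
    ext d
    rw [hTpow, ← hα, ← map_pow, FiniteField.pow_card]
    rfl
  rcases exists_eigenvector_of_pow_card_eq T hT α with h | ⟨c, hc, x, hx, hxc⟩
  · exact (h b).symm
  · exfalso
    have hxa : x * a = f c * x := hxc
    have hnorm : ∀ y : K, ∃ c' : K, x * f y = f c' * x := by
      rintro ⟨y, hy⟩
      change ∃ c' : K, x * y = f c' * x
      induction hy using Algebra.adjoin_induction with
      | mem y hy => exact ⟨c, by rw [Set.mem_singleton_iff.mp hy, hxa]⟩
      | algebraMap r => exact ⟨(r : K), by simp [Int.cast_comm]⟩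
      | add y z _ _ hy hz =>
        obtain ⟨c₁, h₁⟩ := hy
        obtain ⟨c₂, h₂⟩ := hz
        exact ⟨c₁ + c₂, by rw [mul_add, h₁, h₂, map_add, add_mul]⟩
      | mul y z _ _ hy hz =>
        obtain ⟨c₁, h₁⟩ := hy
        obtain ⟨c₂, h₂⟩ := hz
        exact ⟨c₁ * c₂, by rw [← mul_assoc, h₁, mul_assoc, h₂, map_mul, mul_assoc]⟩
    have hcomm := commute_of_normalizes hD f x hnorm α
    rw [hα, hxa, ← hα] at hcomm
    exact hc (hf (mul_right_cancel₀ hx hcomm))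

/-! ### Prime Noetherian periodic rings -/

/-- Primeness of a possibly noncommutative ring, in elementwise form: `a R b = 0` forces `a = 0`
or `b = 0`. The zero ring is allowed. -/
def IsElementwisePrime (R : Type*) [Ring R] : Prop :=
  ∀ a b : R, (∀ r, a * r * b = 0) → a = 0 ∨ b = 0

/-- Levitzki's argument: if a left ideal `L` is nil and `0 ≠ b ∈ L`, then the right ideal `b R` is
nil. A nonzero `a ∈ b R` whose left annihilator is maximal among those of nonzero elements of `b R`
then satisfies `a R a = 0`, against primeness. -/
theorem exists_not_isNilpotent {R : Type*} [Ring R] [IsNoetherianRing R]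
    (hprime : IsElementwisePrime R) (L : Ideal R) (hL : L ≠ ⊥) :
    ∃ x ∈ L, ¬ IsNilpotent x := by
  by_contra! hnil
  obtain ⟨b, hbL, hb⟩ := Submodule.exists_mem_ne_zero_of_ne_bot hL
  let ann : R → Ideal R := fun a => LinearMap.ker (LinearMap.toSpanSingleton R R a)
  have hann : ∀ r a, r ∈ ann a ↔ r * a = 0 := fun r a => by simp [ann]
  let P : Set (Ideal R) := {J | ∃ r, b * r ≠ 0 ∧ J = ann (b * r)}
  obtain ⟨-, ⟨s, hs, rfl⟩, hmax⟩ := WellFounded.has_min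
    (wellFounded_gt : WellFounded ((· > ·) : Ideal R → Ideal R → Prop)) P
    ⟨ann (b * 1), 1, by simpa using hb, rfl⟩
  have hnil' : ∀ r, IsNilpotent (b * r) := by
    intro r
    obtain ⟨k, hk⟩ := hnil (r * b) (L.mul_mem_left r hbL)
    refine ⟨k + 1, ?_⟩
    have hswap : ∀ j, (b * r) ^ (j + 1) = b * (r * b) ^ j * r := by
      intro j
      induction j with
      | zero => simp
      | succ j ih => rw [pow_succ, ih, pow_succ (r * b)]; simp only [mul_assoc]
    rw [hswap, hk, mul_zero, zero_mul]
  have hzero : ∀ r, b * s * r * (b * s) = 0 := by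
    intro r
    by_cases h0 : b * s * r = 0
    · rw [h0, zero_mul]
    obtain ⟨k, hk, hk'⟩ : ∃ k, (b * s * r) ^ (k + 1) ≠ 0 ∧ (b * s * r) ^ (k + 2) = 0 := by
      classical
      have hex : ∃ k, (b * s * r) ^ (k + 1) = 0 := by
        obtain ⟨k, hk⟩ := hnil' (s * r)
        exact ⟨k, by rw [pow_succ, mul_assoc b s r, hk, zero_mul]⟩
      obtain ⟨k, hk⟩ : ∃ k, Nat.find hex = k + 1 := by
        refine Nat.exists_eq_succ_of_ne_zero fun h => h0 ?_
        simpa [h] using Nat.find_spec hex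
      refine ⟨k, Nat.find_min hex (by omega), ?_⟩
      have := Nat.find_spec hex
      rwa [hk] at this
    have hform : (b * s * r) ^ (k + 1) = b * (s * r * (b * s * r) ^ k) := by
      rw [pow_succ']; simp only [mul_assoc]
    have hle : ann (b * s) ≤ ann ((b * s * r) ^ (k + 1)) := by
      intro t ht
      rw [hann] at ht ⊢
      rw [pow_succ', ← mul_assoc, ← mul_assoc, ht, zero_mul, zero_mul]
    have hnlt := hmax (ann ((b * s * r) ^ (k + 1))) ⟨_, hform ▸ hk, by rw [hform]⟩
    have heq := eq_of_le_of_not_lt hle hnlt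
    rw [← hann, heq, hann, ← pow_succ']
    exact hk'
  rcases hprime _ _ hzero with h | h <;> exact hs h

/-- In a prime left Noetherian periodic ring every left ideal is generated by an idempotent: if
`e ∈ L` is an idempotent with `R e` maximal and `R e ≠ L`, then a nonzero idempotent `f ∈ L` with
`f e = 0` makes `e + f - e f` generate a larger left ideal. -/
theorem exists_idempotent_generator {R : Type*} [Ring R] [IsNoetherianRing R]
    (hR : IsPeriodicRing R) (hprime : IsElementwisePrime R) (L : Ideal R) :
    ∃ e ∈ L, IsIdempotentElem e ∧ ∀ x ∈ L, x * e = x := by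
  let P : Set (Ideal R) := {J | ∃ e ∈ L, IsIdempotentElem e ∧ J = Ideal.span {e}}
  obtain ⟨-, ⟨e, heL, he, rfl⟩, hmax⟩ := WellFounded.has_min
    (wellFounded_gt : WellFounded ((· > ·) : Ideal R → Ideal R → Prop)) P
    ⟨_, 0, L.zero_mem, IsIdempotentElem.zero, rfl⟩
  refine ⟨e, heL, he, ?_⟩
  by_contra! hx
  obtain ⟨x, hxL, hx⟩ := hx
  let M : Ideal R := L ⊓ LinearMap.ker (LinearMap.toSpanSingleton R R e)
  have hM : ∀ y, y ∈ M ↔ y ∈ L ∧ y * e = 0 := fun y => by simp [M]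
  have hMne : M ≠ ⊥ := by
    intro h
    have hmem : x - x * e ∈ M := (hM _).mpr
      ⟨L.sub_mem hxL (L.mul_mem_left x heL), by rw [sub_mul, mul_assoc, he.eq, sub_self]⟩
    rw [h, Ideal.mem_bot, sub_eq_zero] at hmem
    exact hx hmem.symm
  obtain ⟨y, hyM, hy⟩ := exists_not_isNilpotent hprime M hMne
  obtain ⟨k, hk, hf⟩ := hR.exists_isIdempotentElem_pow y
  have hf0 : y ^ k ≠ 0 := fun h => hy ⟨k, h⟩
  have hfM : y ^ k ∈ M := M.pow_mem_of_mem hyM k hk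
  generalize y ^ k = f at hf hf0 hfM
  obtain ⟨hfL, hfe⟩ := (hM f).mp hfM
  have hfe' : ∀ z, f * (e * z) = 0 := fun z => by rw [← mul_assoc, hfe, zero_mul]
  have hee : ∀ z, e * (e * z) = e * z := fun z => by rw [← mul_assoc, he.eq]
  have heg : e * (e + f - e * f) = e := by
    rw [mul_sub, mul_add, he.eq, hee, add_sub_cancel_right]
  have hfg : f * (e + f - e * f) = f := by
    rw [mul_sub, mul_add, hfe, hf.eq, hfe', zero_add, sub_zero]
  have hg : IsIdempotentElem (e + f - e * f) := by
    rw [IsIdempotentElem, sub_mul, add_mul, heg, mul_assoc e f, hfg]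
  refine hmax (Ideal.span {e + f - e * f})
    ⟨_, L.sub_mem (L.add_mem heL hfL) (L.mul_mem_left e hfL), hg, rfl⟩ ?_
  refine lt_of_le_of_ne ?_ ?_
  · rw [Ideal.span_le, Set.singleton_subset_iff]
    exact Ideal.mem_span_singleton'.mpr ⟨e, heg⟩
  · intro h
    have hmem : f ∈ Ideal.span {e} := h ▸ Ideal.mem_span_singleton'.mpr ⟨f, hfg⟩
    obtain ⟨z, rfl⟩ := Ideal.mem_span_singleton'.mp hmem
    rw [mul_assoc, he.eq] at hfe
    exact hf0 hfe

theorem isSemisimpleRing_of_prime {R : Type*} [Ring R] [IsNoetherianRing R]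
    (hR : IsPeriodicRing R) (hprime : IsElementwisePrime R) : IsSemisimpleRing R := by
  refine (isSemisimpleModule_iff R R).mpr ⟨fun L => ?_⟩
  obtain ⟨e, heL, he, hgen⟩ := exists_idempotent_generator hR hprime L
  refine ⟨LinearMap.ker (LinearMap.toSpanSingleton R R e), ?_, ?_⟩
  · rw [Submodule.disjoint_def]
    intro x hx hx'
    rw [← hgen x hx]
    simpa using hx'
  · rw [codisjoint_iff, Submodule.eq_top_iff']
    intro x
    rw [Submodule.mem_sup]
    exact ⟨x * e, Ideal.mul_mem_left L x heL, x - x * e, by simp [sub_mul, mul_assoc, he.eq], by simp⟩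

/-- If a two-sided ideal equals `R e` with `e` idempotent, then `e R (1 - e) = 0`, so primeness
gives `e = 0` or `e = 1`. -/
theorem isSimpleRing_of_prime {R : Type*} [Ring R] [Nontrivial R] [IsNoetherianRing R]
    (hR : IsPeriodicRing R) (hprime : IsElementwisePrime R) : IsSimpleRing R := by
  refine ⟨⟨fun I => ?_⟩⟩
  obtain ⟨e, heI, he, hgen⟩ := exists_idempotent_generator hR hprime (TwoSidedIdeal.asIdeal I)
  rw [TwoSidedIdeal.mem_asIdeal] at heI
  have hzero : ∀ r, e * r * (1 - e) = 0 := by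
    intro r
    rw [mul_sub, mul_one, hgen (e * r) (TwoSidedIdeal.mem_asIdeal.mpr (I.mul_mem_right _ _ heI)),
      sub_self]
  rcases hprime _ _ hzero with h | h
  · left
    rw [eq_bot_iff]
    intro x hx
    have := hgen x (TwoSidedIdeal.mem_asIdeal.mpr hx)
    rw [h, mul_zero] at this
    rw [← this]
    exact TwoSidedIdeal.zero_mem _
  · right
    rw [← TwoSidedIdeal.one_mem_iff, sub_eq_zero.mp h]
    exact heI

/-! ### Integrality of group rings of finite groups -/

/-- By Wedderburn–Artin and Jacobson's theorem a nonzero `R` is a matrix ring over a field `D`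
that is integral over `ℤ`, and the group ring of a finite group over it is a finite `D`-algebra. -/
theorem isIntegral_monoidAlgebra_of_prime {R : Type*} [Ring R] [IsNoetherianRing R]
    (hR : IsPeriodicRing R) (hprime : IsElementwisePrime R) (G : Type*) [Group G] [Finite G]
    (x : MonoidAlgebra R G) : IsIntegral ℤ x := by
  cases subsingleton_or_nontrivial R
  · have : Subsingleton (MonoidAlgebra R G) :=
      ⟨fun a b => MonoidAlgebra.ext (Subsingleton.elim _ _)⟩
    rw [Subsingleton.elim x 0]
    exact isIntegral_zero
  have := isSemisimpleRing_of_prime hR hprime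
  have := isSimpleRing_of_prime hR hprime
  obtain ⟨n, hn, D, hD, ⟨φ⟩⟩ := IsSimpleRing.exists_ringEquiv_matrix_divisionRing R
  have hper : IsPeriodicRing D :=
    (hR.of_surjective φ.toRingHom φ.surjective).of_injective (Matrix.scalar (Fin n))
      fun a b hab => by simpa using hab
  let _ : Field D := { hD with mul_comm := hper.mul_comm_of_divisionRing }
  have hDint : Algebra.IsIntegral ℤ D := ⟨hper.isIntegral⟩
  have hfin : Module.Finite D (MonoidAlgebra (Matrix (Fin n) (Fin n) D) G) :=
    Module.Finite.equiv (MonoidAlgebra.coeffLinearEquiv D).symm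
  let ψ : MonoidAlgebra R G →ₐ[ℤ] MonoidAlgebra (Matrix (Fin n) (Fin n) D) G :=
    (MonoidAlgebra.mapRingHom G φ.toRingHom).toIntAlgHom
  have hψ : Function.Injective ψ := by
    intro a b hab
    ext g
    apply φ.injective
    have hab' : MonoidAlgebra.mapRingHom G φ.toRingHom a =
        MonoidAlgebra.mapRingHom G φ.toRingHom b := hab
    simpa using congrArg (fun z => z.coeff g) hab'
  rw [← isIntegral_algHom_iff ψ hψ]
  exact isIntegral_trans (A := D) _ (IsIntegral.of_finite D _)

/-- Every element of `R[G]` is a root, modulo `I[G]`, of a monic integer polynomial. -/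
def IntegralModulo {R : Type*} [Ring R] (G : Type*) [Group G] (I : Ideal R) : Prop :=
  ∀ x : MonoidAlgebra R G, ∃ f : ℤ[X], f.Monic ∧ ∀ g, (aeval x f).coeff g ∈ I

theorem IntegralModulo.of_mul {R : Type*} [Ring R] {G : Type*} [Group G] {I A B : Ideal R}
    (hA : IntegralModulo G A) (hB : IntegralModulo G B) (h : ∀ a ∈ A, ∀ b ∈ B, a * b ∈ I) :
    IntegralModulo G I := by
  classical
  intro x
  obtain ⟨p, hp, hpA⟩ := hA x
  obtain ⟨q, hq, hqB⟩ := hB x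
  refine ⟨p * q, hp.mul hq, fun g => ?_⟩
  rw [map_mul, MonoidAlgebra.coeff_mul]
  refine I.sum_mem fun g₁ _ => I.sum_mem fun g₂ _ => ?_
  dsimp only
  split_ifs
  · exact h _ (hpA g₁) _ (hqB g₂)
  · exact I.zero_mem

theorem IntegralModulo.of_quotient {R : Type*} [Ring R] {G : Type*} [Group G] (I : Ideal R)
    [I.IsTwoSided] (h : ∀ x : MonoidAlgebra (R ⧸ I) G, IsIntegral ℤ x) : IntegralModulo G I := by
  intro x
  let ψ : MonoidAlgebra R G →ₐ[ℤ] MonoidAlgebra (R ⧸ I) G :=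
    (MonoidAlgebra.mapRingHom G (Ideal.Quotient.mk I)).toIntAlgHom
  obtain ⟨f, hf, hfx⟩ := h (ψ x)
  refine ⟨f, hf, fun g => ?_⟩
  have h0 : MonoidAlgebra.mapRingHom G (Ideal.Quotient.mk I) (aeval x f) = 0 := by
    change ψ (aeval x f) = 0
    rw [← aeval_algHom_apply]
    exact hfx
  rw [← Ideal.Quotient.eq_zero_iff_mem]
  simpa using congrArg (fun z => z.coeff g) h0

/-- Noetherian induction: if `I` is not prime then `A B ⊆ I` for two strictly larger two-sided
ideals, and the two monic polynomials can be multiplied. -/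
theorem integralModulo_of_isTwoSided {R : Type*} [Ring R] [IsNoetherianRing R]
    (hR : IsPeriodicRing R) (G : Type*) [Group G] [Finite G] (I : Ideal R) :
    I.IsTwoSided → IntegralModulo G I := by
  induction I using WellFoundedGT.induction with
  | _ I ih =>
  intro hI
  by_cases hprime : IsElementwisePrime (R ⧸ I)
  · have : IsNoetherianRing (R ⧸ I) :=
      isNoetherianRing_of_surjective R (R ⧸ I) (Ideal.Quotient.mk I) Ideal.Quotient.mk_surjective
    exact .of_quotient I (isIntegral_monoidAlgebra_of_prime
      (hR.of_surjective (Ideal.Quotient.mk I) Ideal.Quotient.mk_surjective) hprime G)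
  unfold IsElementwisePrime at hprime
  push Not at hprime
  obtain ⟨a', b', hab, ha, hb⟩ := hprime
  obtain ⟨a, rfl⟩ := Ideal.Quotient.mk_surjective a'
  obtain ⟨b, rfl⟩ := Ideal.Quotient.mk_surjective b'
  rw [Ne, Ideal.Quotient.eq_zero_iff_mem] at ha hb
  let B : Ideal R :=
    { carrier := {y | ∀ r, a * r * y ∈ I}
      add_mem' := fun {y z} hy hz r => by rw [mul_add]; exact I.add_mem (hy r) (hz r)
      zero_mem' := fun r => by simp
      smul_mem' := fun c y hy r => by
        have := hy (r * c)
        rwa [← mul_assoc, mul_assoc] at this }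
  have hBts : B.IsTwoSided := ⟨fun c hy r => by
    rw [← mul_assoc]; exact I.mul_mem_right c (hy r)⟩
  let A : Ideal R :=
    { carrier := {x | ∀ y ∈ B, x * y ∈ I}
      add_mem' := fun {y z} hy hz r hr => by rw [add_mul]; exact I.add_mem (hy r hr) (hz r hr)
      zero_mem' := fun r _ => by simp
      smul_mem' := fun c y hy r hr => by
        rw [smul_eq_mul, mul_assoc]; exact I.mul_mem_left c (hy r hr) }
  have hAts : A.IsTwoSided := ⟨fun c hy r hr => by
    rw [mul_assoc]; exact hy _ (B.mul_mem_left c hr)⟩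
  have hIB : I < B := by
    refine lt_of_le_of_ne (fun y hy r => I.mul_mem_left _ hy) fun h => hb ?_
    rw [h]
    intro r
    rw [← Ideal.Quotient.eq_zero_iff_mem]
    simpa using hab (Ideal.Quotient.mk I r)
  have hIA : I < A := by
    refine lt_of_le_of_ne (fun x hx y _ => I.mul_mem_right y hx) fun h => ha ?_
    rw [h]
    intro y hy
    simpa using hy 1
  exact (ih A hIA hAts).of_mul (ih B hIB hBts) fun x hx y hy => hx y hy

theorem isIntegral_monoidAlgebra_of_finite {R : Type*} [Ring R] [IsNoetherianRing R]
    (hR : IsPeriodicRing R) (G : Type*) [Group G] [Finite G] (x : MonoidAlgebra R G) :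
    IsIntegral ℤ x := by
  obtain ⟨f, hf, hfx⟩ := integralModulo_of_isTwoSided hR G ⊥ inferInstance x
  refine ⟨f, hf, ?_⟩
  change aeval x f = 0
  ext g
  simpa using hfx g

/-! ### Locally finite groups -/

theorem monoidAlgebra_periodic_of_periodic_noetherian
    (R : Type*) [Ring R] [IsNoetherianRing R] (hR : IsPeriodicRing R)
    (G : Type*) [Group G] (hlf : LocallyFiniteGroup G) :
    IsPeriodicRing (MonoidAlgebra R G) := by
  obtain ⟨N, hN, h0⟩ := hR.exists_natCast_eq_zero
  have h0' : (N : MonoidAlgebra R G) = 0 := by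
    rw [← map_natCast (MonoidAlgebra.singleOneRingHom (R := R) (M := G)) N, h0, map_zero]
  refine isPeriodicRing_of_isIntegral hN h0' fun x => ?_
  let H : Subgroup G := Subgroup.closure x.coeff.support
  have hH : Finite H := hlf H ⟨x.coeff.support, rfl⟩
  let ψ : MonoidAlgebra R H →ₐ[ℤ] MonoidAlgebra R G :=
    (MonoidAlgebra.mapDomainRingHom R H.subtype).toIntAlgHom
  have hψ : ψ (x.comapDomain H.subtype H.subtype_injective) = x := by
    refine MonoidAlgebra.mapDomain_comapDomain ?_ H.subtype_injective
    intro g hg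
    exact ⟨⟨g, Subgroup.subset_closure hg⟩, rfl⟩
  rw [← hψ]
  exact (isIntegral_monoidAlgebra_of_finite hR H _).map ψ
end
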